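/- The topological complexity of the configuration space of n ≥ 2 ordered distinct points in the plane ℝ² equals 2n − 2. -/

import Mathlib

/-- The space of continuous paths `[0,1] → X`, with the compact-open topology. -/
abbrev PathSpace (X : Type*) [TopologicalSpace X] := C(unitInterval, X)

/-- `U ⊆ X × X` admits a continuous section of the path fibration
`π : PX → X × X`, `π(γ) = (γ 0, γ 1)`. -/
def HasMotionPlanningSection (X : Type*) [TopologicalSpace X] (U : Set (X × X)) : Prop :=
  ∃ s : C(U, PathSpace X), ∀ p : U, s p 0 = (p : X × X).1 ∧ s p 1 = (p : X × X).2

/-- `X × X` can be covered by `k` open sets, over each of which the path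
fibration admits a continuous section. -/
def HasTCCover (X : Type*) [TopologicalSpace X] (k : ℕ) : Prop :=
  ∃ U : Fin k → Set (X × X), (∀ i, IsOpen (U i)) ∧ (⋃ i, U i) = Set.univ ∧
    ∀ i, HasMotionPlanningSection X (U i)

/-- The topological complexity of `X` (in the unnormalized convention of Farber,
so that `TopComplexity(point) = 1`), as an extended natural number. -/
noncomputable def TopComplexity (X : Type*) [TopologicalSpace X] : ℕ∞ :=
  sInf {N : ℕ∞ | ∃ k : ℕ, N = k ∧ HasTCCover X k}

/-- The configuration space of `n` ordered distinct points in `ℝ^m`. -/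
abbrev ConfSpace (n m : ℕ) := {f : Fin n → (Fin m → ℝ) // Function.Injective f}

section TorusDegree

open MeasureTheory Set Topology

variable {ι : Type*} [Fintype ι]

/-- The integer lattice in `ι → ℝ`. -/
abbrev intLattice (ι : Type*) [Fintype ι] : Submodule ℤ (ι → ℝ) :=
  Submodule.span ℤ (Set.range (Pi.basisFun ℝ ι))

/-- Periodicity with respect to the integer lattice. -/
def LatticePeriodic {α : Type*} (f : (ι → ℝ) → α) : Prop :=
  ∀ v ∈ intLattice ι, ∀ x, f (v + x) = f x

/-- The half-open unit cube, a fundamental domain of the integer lattice. -/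
abbrev unitCube (ι : Type*) [Fintype ι] : Set (ι → ℝ) :=
  ZSpan.fundamentalDomain (Pi.basisFun ℝ ι)

lemma mem_intLattice_iff {v : ι → ℝ} : v ∈ intLattice ι ↔ ∀ i, ∃ k : ℤ, (k : ℝ) = v i := by
  rw [intLattice, Module.Basis.mem_span_iff_repr_mem]
  simp

lemma latticePeriodic_iff {α : Type*} {f : (ι → ℝ) → α} :
    LatticePeriodic f ↔ ∀ (k : ι → ℤ) x, f ((fun i => (k i : ℝ)) + x) = f x := by
  constructor
  · intro h k x
    exact h _ (mem_intLattice_iff.2 fun i => ⟨k i, rfl⟩) x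
  · intro h v hv x
    choose k hk using mem_intLattice_iff.1 hv
    rw [← funext hk]
    exact h k x

lemma isCompact_closure_unitCube : IsCompact (closure (unitCube ι)) :=
  (ZSpan.fundamentalDomain_isBounded (Pi.basisFun ℝ ι)).isCompact_closure

lemma exists_lattice_add_mem_unitCube (x : ι → ℝ) : ∃ v ∈ intLattice ι, v + x ∈ unitCube ι := by
  obtain ⟨v, hv, -⟩ := ZSpan.exist_unique_vadd_mem_fundamentalDomain (Pi.basisFun ℝ ι) x
  exact ⟨v, v.2, hv⟩

lemma volume_unitCube : volume (unitCube ι) = 1 := by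
  rw [unitCube, ZSpan.fundamentalDomain_pi_basisFun, Real.volume_pi_Ico]
  simp

lemma LatticePeriodic.uniformContinuous {F : Type*} [UniformSpace F] {f : (ι → ℝ) → F}
    (hp : LatticePeriodic f) (hf : Continuous f) : UniformContinuous f := by
  intro r hr
  have h := isCompact_closure_unitCube (ι := ι).uniformContinuousAt_of_continuousAt f
    (fun a _ => hf.continuousAt) hr
  rw [Filter.mem_map]
  obtain ⟨ε, hε, hs⟩ := Metric.mem_uniformity_dist.1 h
  refine Metric.mem_uniformity_dist.2 ⟨ε, hε, fun {x y} hxy => ?_⟩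
  obtain ⟨v, hv, hvx⟩ := exists_lattice_add_mem_unitCube x
  have := hs (a := v + x) (b := v + y) (by simpa using hxy) (subset_closure hvx)
  simpa only [mem_preimage, hp v hv] using this

lemma LatticePeriodic.exists_norm_le {F : Type*} [NormedAddCommGroup F] {f : (ι → ℝ) → F}
    (hp : LatticePeriodic f) (hf : Continuous f) : ∃ C, ∀ x, ‖f x‖ ≤ C := by
  obtain ⟨C, hC⟩ := isCompact_closure_unitCube (ι := ι).exists_bound_of_continuousOn hf.continuousOn
  refine ⟨C, fun x => ?_⟩
  obtain ⟨v, hv, hvx⟩ := exists_lattice_add_mem_unitCube x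
  rw [← hp v hv]
  exact hC _ (subset_closure hvx)

lemma LatticePeriodic.fderiv {F : Type*} [NormedAddCommGroup F] [NormedSpace ℝ F]
    {f : (ι → ℝ) → F} (hp : LatticePeriodic f) : LatticePeriodic (fderiv ℝ f) := by
  intro v hv x
  have : f = fun y => f (v + y) := funext fun y => (hp v hv y).symm
  conv_rhs => rw [this]
  rw [fderiv_comp_add_left]

lemma LatticePeriodic.exists_contDiff_approx {f : (ι → ℝ) → (ι → ℝ)} (hp : LatticePeriodic f)
    (hf : Continuous f) {ε : ℝ} (hε : 0 < ε) :
    ∃ g : (ι → ℝ) → (ι → ℝ), ContDiff ℝ 1 g ∧ LatticePeriodic g ∧ ∀ x, dist (g x) (f x) ≤ ε := by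
  obtain ⟨δ, hδ, h⟩ := Metric.uniformContinuous_iff.1 (hp.uniformContinuous hf) ε hε
  let φ : ContDiffBump (0 : ι → ℝ) := ⟨δ / 2, δ, by positivity, by linarith⟩
  refine ⟨convolution (φ.normed volume) f (ContinuousLinearMap.lsmul ℝ ℝ) volume, ?_, ?_, ?_⟩
  · exact φ.hasCompactSupport_normed.contDiff_convolution_left (n := 1) _ φ.contDiff_normed
      hf.locallyIntegrable
  · intro v hv x
    simp only [convolution]
    congr 1
    ext1 y
    rw [add_sub_assoc, hp v hv]
  · intro x
    exact ContDiffBump.dist_normed_convolution_le hf.aestronglyMeasurable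
      fun y hy => (h (show dist y x < δ from hy)).le

lemma integrableOn_unitCube {f : (ι → ℝ) → ℝ} (hf : Continuous f) :
    IntegrableOn f (unitCube ι) :=
  (hf.continuousOn.integrableOn_compact isCompact_closure_unitCube).mono_set subset_closure

/-- `∫ det (1 + t Db)` is a polynomial function of `t`. -/
lemma exists_polynomial_integral_det [DecidableEq ι] (M : (ι → ℝ) → Matrix ι ι ℝ)
    (hM : Continuous M) : ∃ p : Polynomial ℝ, ∀ t : ℝ,
      p.eval t = ∫ x in unitCube ι, (1 + t • M x).det := by
  let R := C((ι → ℝ), ℝ)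
  let A : Matrix ι ι R := Matrix.of fun i j => ⟨fun x => M x i j, by fun_prop⟩
  let Q : Polynomial R := (1 + (Polynomial.X : Polynomial R) • A.map Polynomial.C).det
  have hQ : ∀ t x, (1 + t • M x).det = ∑ k ∈ Q.support, t ^ k * Q.coeff k x := by
    intro t x
    let e : Polynomial R →+* ℝ := Polynomial.eval₂RingHom
      ((Pi.evalRingHom (fun _ : ι → ℝ => ℝ) x).comp ContinuousMap.coeFnRingHom) t
    have h1 : e Q = (1 + t • M x).det := by
      simp only [Q]
      rw [RingHom.map_det]
      congr 1
      ext i j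
      have hM : ContinuousMap.coeFnRingHom (A i j) x = M x i j := rfl
      by_cases hij : i = j
      · subst hij; simp [e, hM, mul_comm t]
      · simp [e, hM, hij, mul_comm t]
    rw [← h1]
    simp only [e, Polynomial.coe_eval₂RingHom, Polynomial.eval₂_eq_sum, Polynomial.sum]
    refine Finset.sum_congr rfl fun k _ => ?_
    rw [mul_comm]
    rfl
  refine ⟨∑ k ∈ Q.support, Polynomial.C (∫ x in unitCube ι, Q.coeff k x) * Polynomial.X ^ k,
    fun t => ?_⟩
  simp_rw [hQ]
  rw [integral_finsetSum _ fun k _ =>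
    ((integrableOn_unitCube (Q.coeff k).continuous).const_mul (t ^ k))]
  simp only [Polynomial.eval_finsetSum, Polynomial.eval_mul, Polynomial.eval_C,
    Polynomial.eval_pow, Polynomial.eval_X, integral_const_mul]
  exact Finset.sum_congr rfl fun k _ => mul_comm _ _

lemma isAddFundamentalDomain_image {F : (ι → ℝ) → (ι → ℝ)} (hF : Continuous F)
    (hbij : Function.Bijective F) (heq : ∀ v ∈ intLattice ι, ∀ x, F (v + x) = v + F x) :
    IsAddFundamentalDomain (intLattice ι) (F '' unitCube ι) volume := by
  refine IsAddFundamentalDomain.mk' ?_ fun y => ?_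
  · exact ((ZSpan.fundamentalDomain_measurableSet _).image_of_continuousOn_injOn hF.continuousOn
      hbij.1.injOn).nullMeasurableSet
  · obtain ⟨x, rfl⟩ := hbij.2 y
    have key : ∀ v : intLattice ι, v +ᵥ F x ∈ F '' unitCube ι ↔ v +ᵥ x ∈ unitCube ι := by
      intro v
      have : v +ᵥ F x = F (v +ᵥ x) := (heq v v.2 x).symm
      rw [this, hbij.1.mem_set_image]
    simp_rw [key]
    exact ZSpan.exist_unique_vadd_mem_fundamentalDomain (Pi.basisFun ℝ ι) x

lemma integral_det_of_small {b : (ι → ℝ) → (ι → ℝ)} (hb : ContDiff ℝ 1 b)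
    (hp : LatticePeriodic b) : ∃ δ > (0 : ℝ), ∀ t ∈ Ioo 0 δ,
      ∫ x in unitCube ι, (ContinuousLinearMap.id ℝ (ι → ℝ) + t • fderiv ℝ b x).det = 1 := by
  have hbd := hb.continuous_fderiv one_ne_zero
  obtain ⟨C, hC⟩ := hp.fderiv.exists_norm_le hbd
  have hC0 : 0 ≤ C := (norm_nonneg _).trans (hC 0)
  have hdet : ∀ᶠ A in 𝓝 (ContinuousLinearMap.id ℝ (ι → ℝ)), 0 < A.det := by
    refine ContinuousLinearMap.continuous_det.continuousAt.eventually (lt_mem_nhds ?_)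
    simp [ContinuousLinearMap.det]
  obtain ⟨r, hr, hdet⟩ := Metric.eventually_nhds_iff.1 hdet
  refine ⟨min r 1 / (C + 1), by positivity, fun t ht => ?_⟩
  have ht0 : 0 < t := ht.1
  have htC : t * C < min r 1 := by
    have := (lt_div_iff₀ (by positivity)).1 ht.2
    nlinarith
  have hdiff : Differentiable ℝ b := hb.differentiable one_ne_zero
  set F : (ι → ℝ) → (ι → ℝ) := fun x => x + t • b x with hFdef
  have hF' : ∀ x, HasFDerivAt F (ContinuousLinearMap.id ℝ (ι → ℝ) + t • fderiv ℝ b x) x :=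
    fun x => (hasFDerivAt_id x).add ((hdiff x).hasFDerivAt.const_smul t)
  have hFc : Continuous F := continuous_id.add (hb.continuous.const_smul t)
  have happ : ApproximatesLinearOn F
      ((ContinuousLinearEquiv.refl ℝ (ι → ℝ) : (ι → ℝ) ≃L[ℝ] (ι → ℝ)) : (ι → ℝ) →L[ℝ] (ι → ℝ)) univ
      (Real.toNNReal (t * C)) := by
    intro x _ y _
    have hl : LipschitzWith (Real.toNNReal C) b :=
      lipschitzWith_of_nnnorm_fderiv_le hdiff fun x => by
        rw [← NNReal.coe_le_coe, Real.coe_toNNReal _ hC0]; exact hC x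
    have h1 := hl.dist_le_mul x y
    rw [dist_eq_norm, dist_eq_norm, Real.coe_toNNReal _ hC0] at h1
    have h2 : F x - F y - (x - y) = t • (b x - b y) := by
      simp only [hFdef, smul_sub]; abel
    rw [Real.coe_toNNReal _ (by positivity)]
    simp only [ContinuousLinearEquiv.coe_refl, ContinuousLinearMap.coe_id', id_eq, h2, norm_smul,
      Real.norm_eq_abs, abs_of_pos ht0]
    nlinarith
  have hc : Subsingleton (ι → ℝ) ∨ Real.toNNReal (t * C) <
      ‖((ContinuousLinearEquiv.refl ℝ (ι → ℝ)).symm : (ι → ℝ) →L[ℝ] (ι → ℝ))‖₊⁻¹ := by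
    rcases subsingleton_or_nontrivial (ι → ℝ) with h | h
    · exact Or.inl h
    · right
      have : ‖((ContinuousLinearEquiv.refl ℝ (ι → ℝ)).symm : (ι → ℝ) →L[ℝ] (ι → ℝ))‖₊ = 1 := by
        ext
        exact ContinuousLinearMap.norm_id
      rw [this, inv_one, ← NNReal.coe_lt_coe, Real.coe_toNNReal _ (by positivity)]
      exact htC.trans_le (min_le_right _ _)
  have hinj : Function.Injective F := by
    have := happ.injective hc
    rwa [← injOn_iff_injective, injOn_univ] at this
  have hbij : Function.Bijective F := ⟨hinj, happ.surjective hc⟩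
  have hfd := isAddFundamentalDomain_image hFc hbij fun v hv x => by
    simp only [hFdef, hp v hv]; abel
  have hvol : volume (F '' unitCube ι) = 1 := by
    have : VAddInvariantMeasure (intLattice ι) (ι → ℝ) volume :=
      ⟨fun c s _ => measure_preimage_add volume (c : ι → ℝ) s⟩
    rw [← volume_unitCube (ι := ι)]
    exact hfd.measure_eq (ZSpan.isAddFundamentalDomain (Pi.basisFun ℝ ι) volume)
  have hinteg := integral_image_eq_integral_abs_det_fderiv_smul volume
    (ZSpan.fundamentalDomain_measurableSet (Pi.basisFun ℝ ι))
    (fun x _ => (hF' x).hasFDerivWithinAt) hinj.injOn (fun _ => (1 : ℝ))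
  simp only [integral_const, smul_eq_mul, mul_one, measureReal_restrict_apply_univ] at hinteg
  rw [measureReal_def, hvol, ENNReal.toReal_one] at hinteg
  rw [hinteg]
  congr 1
  ext x
  rw [abs_of_pos]
  apply hdet
  rw [dist_eq_norm, add_sub_cancel_left, norm_smul, Real.norm_eq_abs, abs_of_pos ht0]
  calc t * ‖fderiv ℝ b x‖ ≤ t * C := by gcongr; exact hC x
    _ < r := htC.trans_le (min_le_left _ _)

/-- A `C¹` self-map of the torus homotopic to the identity has degree one. -/
theorem integral_det_id_add_fderiv {b : (ι → ℝ) → (ι → ℝ)} (hb : ContDiff ℝ 1 b)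
    (hp : LatticePeriodic b) :
    ∫ x in unitCube ι, (ContinuousLinearMap.id ℝ (ι → ℝ) + fderiv ℝ b x).det = 1 := by
  classical
  have hbd := hb.continuous_fderiv one_ne_zero
  obtain ⟨δ, hδ, h⟩ := integral_det_of_small hb hp
  obtain ⟨p, hpoly⟩ := exists_polynomial_integral_det
    (fun x => LinearMap.toMatrix' (fderiv ℝ b x : (ι → ℝ) →ₗ[ℝ] (ι → ℝ)))
    (by
      refine continuous_matrix fun i j => ?_
      simp only [LinearMap.toMatrix'_apply, ContinuousLinearMap.coe_coe]
      fun_prop)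
  have hdet : ∀ t : ℝ, ∀ x, (ContinuousLinearMap.id ℝ (ι → ℝ) + t • fderiv ℝ b x).det =
      (1 + t • LinearMap.toMatrix' (fderiv ℝ b x : (ι → ℝ) →ₗ[ℝ] (ι → ℝ))).det := by
    intro t x
    rw [ContinuousLinearMap.det, ← LinearMap.det_toMatrix']
    congr 1
    simp [LinearMap.toMatrix'_id]
  have hone : p = 1 := by
    refine Polynomial.eq_of_infinite_eval_eq _ _ ((Ioo_infinite hδ).mono fun t ht => ?_)
    rw [mem_ofPred_eq, hpoly, Polynomial.eval_one, ← h t ht]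
    simp_rw [hdet]
  have := hpoly 1
  rw [hone, Polynomial.eval_one] at this
  simp_rw [← hdet, one_smul] at this
  exact this.symm

/-- There is a `C¹` degree one map of the circle which collapses a neighbourhood of the
base point. -/
lemma exists_collapse : ∃ η : ℝ → ℝ, ContDiff ℝ 1 η ∧ (∀ (k : ℤ) (x : ℝ), η (k + x) = k + η x) ∧
    ∀ (k : ℤ) (x : ℝ), |x - k| ≤ 1 / 8 → deriv η x = 0 := by
  set ρ : ℝ → ℝ := fun x => max 0 (-Real.cos (2 * Real.pi * x)) with hρ
  have hρc : Continuous ρ := by fun_prop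
  have hρp : Function.Periodic ρ 1 := by
    intro x
    simp only [hρ, mul_add, mul_one, Real.cos_add_two_pi]
  have hI : 0 < ∫ x in (0 : ℝ)..1, ρ x := by
    refine intervalIntegral.integral_pos one_pos hρc.continuousOn (fun x _ => le_max_left _ _)
      ⟨1 / 2, by norm_num, ?_⟩
    have : 2 * Real.pi * (1 / 2) = Real.pi := by ring
    simp only [hρ, this, Real.cos_pi]
    norm_num
  set I := ∫ x in (0 : ℝ)..1, ρ x
  have hinteg : ∀ a b, IntervalIntegrable ρ volume a b := fun a b => hρc.intervalIntegrable a b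
  have hd : ∀ x, HasDerivAt (fun u => I⁻¹ * ∫ x in (0 : ℝ)..u, ρ x) (I⁻¹ * ρ x) x := fun x =>
    (intervalIntegral.integral_hasDerivAt_right (hinteg 0 x)
      (hρc.stronglyMeasurableAtFilter _ _) hρc.continuousAt).const_mul _
  refine ⟨fun u => I⁻¹ * ∫ x in (0 : ℝ)..u, ρ x, ?_, fun k x => ?_, fun k x hx => ?_⟩
  · rw [contDiff_one_iff_deriv]
    refine ⟨fun x => (hd x).differentiableAt, ?_⟩
    rw [funext fun x => (hd x).deriv]
    fun_prop
  · have h1 : ∫ t in (0 : ℝ)..(k + x), ρ t = k * I + ∫ t in (0 : ℝ)..x, ρ t := by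
      rw [← intervalIntegral.integral_add_adjacent_intervals (hinteg 0 x) (hinteg x _), add_comm,
        add_comm (k : ℝ) x]
      congr 1
      have := hρp.intervalIntegral_add_zsmul_eq k x (fun a b => hinteg a b)
      rw [hρp.intervalIntegral_add_eq x 0] at this
      simpa using this
    simp only [h1, mul_add]
    field_simp
  · rw [(hd x).deriv]
    have : ρ x = 0 := by
      have hcos : Real.cos (2 * Real.pi * x) = Real.cos (2 * Real.pi * (x - k)) := by
        rw [mul_sub, mul_comm _ (k : ℝ), Real.cos_sub_int_mul_two_pi]
      simp only [hρ, hcos]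
      refine max_eq_left (neg_nonpos.2 (Real.cos_nonneg_of_mem_Icc ?_))
      have := abs_le.1 hx
      constructor <;> nlinarith [Real.pi_pos]
    simp [this]

/-- If `b` is a continuous periodic vector field, then some point of the torus has no coordinate
of `x + b x` integral. -/
theorem exists_add_ne_int {b : (ι → ℝ) → (ι → ℝ)} (hb : Continuous b) (hp : LatticePeriodic b) :
    ∃ x, ∀ i, ∀ k : ℤ, x i + b x i ≠ k := by
  by_contra! hcon
  obtain ⟨c, hc, hcp, hcb⟩ := hp.exists_contDiff_approx hb (show (0 : ℝ) < 1 / 8 by norm_num)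
  obtain ⟨η, hη, hηk, hη0⟩ := exists_collapse
  set G : (ι → ℝ) → (ι → ℝ) := fun x i => η (x i + c x i) with hG
  have hci : ∀ i, ContDiff ℝ 1 fun x => c x i := fun i => contDiff_pi.1 hc i
  have hGc : ContDiff ℝ 1 G := contDiff_pi.2 fun i =>
    hη.comp ((contDiff_apply ℝ ℝ i).add (hci i))
  have hper : LatticePeriodic fun x => G x - x := by
    refine latticePeriodic_iff.2 fun k x => ?_
    ext i
    have := latticePeriodic_iff.1 hcp k x
    simp only [hG, this, Pi.sub_apply, Pi.add_apply, add_assoc, hηk]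
    ring
  have hinteg := integral_det_id_add_fderiv
    (hGc.sub contDiff_id : ContDiff ℝ 1 fun x => G x - x) hper
  refine zero_ne_one
    (hinteg ▸ (integral_eq_zero_of_ae (Filter.Eventually.of_forall fun x => ?_))).symm
  have hfd : ContinuousLinearMap.id ℝ (ι → ℝ) + fderiv ℝ (fun x => G x - x) x = fderiv ℝ G x := by
    rw [fderiv_fun_sub (hGc.differentiable one_ne_zero x) differentiableAt_fun_id, fderiv_fun_id]
    abel
  obtain ⟨i, k, hik⟩ := hcon x
  have hrow : ∀ v, fderiv ℝ G x v i = 0 := by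
    intro v
    have h1 : HasFDerivAt (fun y : ι → ℝ => y i + c y i)
        (fderiv ℝ (fun y : ι → ℝ => y i + c y i) x) x :=
      ((((contDiff_apply ℝ ℝ i).add (hci i)).differentiable one_ne_zero) x).hasFDerivAt
    have h2 : HasDerivAt η 0 (x i + c x i) := by
      rw [← hη0 k (x i + c x i) ?_]
      · exact (hη.differentiable one_ne_zero _).hasDerivAt
      · have h3 := (dist_pi_le_iff (by norm_num)).1 (hcb x) i
        rw [Real.dist_eq] at h3
        rwa [← hik, add_sub_add_left_eq_sub]
    have h4 := h2.comp_hasFDerivAt x h1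
    have h5 := hasFDerivAt_pi'.1 (hGc.differentiable one_ne_zero x).hasFDerivAt i
    have := h5.unique h4
    simpa using congrArg (fun L => L v) this
  have hdet : (fderiv ℝ G x).det = 0 := by
    classical
    rw [ContinuousLinearMap.det, ← LinearMap.det_toMatrix']
    refine Matrix.det_eq_zero_of_row_eq_zero i fun j => ?_
    simp [LinearMap.toMatrix'_apply, hrow]
  simpa [hfd] using hdet

end TorusDegree

section ToricObstruction

open Set Topology

lemma HasMotionPlanningSection.exists_log {X : Type*} [TopologicalSpace X] {U : Set (X × X)}
    (hU : HasMotionPlanningSection X U) (f : C(X, ℂ)) (hf : ∀ x, f x ≠ 0) :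
    ∃ A : C(U, ℂ), ∀ p : U, f p.1.2 = Complex.exp (A p) * f p.1.1 := by
  obtain ⟨s, hs⟩ := hU
  let H : C(unitInterval × U, {z : ℂ // z ≠ 0}) :=
    ⟨fun q => ⟨f (s q.2 q.1) / f q.2.1.1, div_ne_zero (hf _) (hf _)⟩, by
      refine Continuous.subtype_mk (Continuous.div ?_ ?_ fun q => hf _) _
      · fun_prop
      · fun_prop⟩
  have H0 : ∀ a : U, H (0, a) = ⟨Complex.exp ((ContinuousMap.const U (0 : ℂ)) a),
      Complex.exp_ne_zero _⟩ := by
    intro a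
    ext
    simp [H, (hs a).1, div_self (hf _)]
  let A := Complex.isCoveringMap_exp.liftHomotopy H (ContinuousMap.const U 0) H0
  refine ⟨⟨fun p => A (1, p), by fun_prop⟩, fun p => ?_⟩
  have h := congrFun (Complex.isCoveringMap_exp.liftHomotopy_lifts H (ContinuousMap.const U 0) H0)
    (1, p)
  have h' : Complex.exp (A (1, p)) = f (s p 1) / f p.1.1 := congrArg Subtype.val h
  rw [(hs p).2] at h'
  change f p.1.2 = Complex.exp (A (1, p)) * f p.1.1
  rw [h', div_mul_cancel₀ _ (hf _)]

lemma hasMotionPlanningSection_empty (X : Type*) [TopologicalSpace X] :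
    HasMotionPlanningSection X ∅ :=
  ⟨⟨fun p => p.2.elim, continuous_iff_continuousAt.2 fun p => p.2.elim⟩, fun p => p.2.elim⟩

/-- A torus in `X × X` on which the differences of the arguments of the functions `f i` restrict to
the coordinate classes obstructs motion planners with as many domains as its dimension. -/
theorem not_cover_of_torus {X ι : Type*} [TopologicalSpace X] [NormalSpace (X × X)] [Fintype ι]
    (f : ι → C(X, ℂ)) (hf : ∀ i x, f i x ≠ 0) (F : C(ι → ℝ, X × X)) (hF : LatticePeriodic F)
    (c : ι → (ι → ℝ) → ℂ) (hc : ∀ i, Continuous (c i)) (hcp : ∀ i, LatticePeriodic (c i))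
    (h : ∀ i z, f i (F z).2 =
      Complex.exp (2 * Real.pi * Complex.I * z i + c i z) * f i (F z).1)
    (U : ι → Set (X × X)) (hUo : ∀ i, IsOpen (U i)) (hUc : ⋃ i, U i = univ)
    (hUs : ∀ i, HasMotionPlanningSection X (U i)) : False := by
  choose A hA using fun i => (hUs i).exists_log (f i) (hf i)
  obtain ⟨V, hVc, hVcl, hVU⟩ := exists_iUnion_eq_closed_subset hUo (fun x => toFinite _) hUc
  have hext : ∀ i, ∃ B : C(X × X, ℂ), ∀ p (hp : p ∈ V i), B p = A i ⟨p, hVU i hp⟩ := by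
    intro i
    obtain ⟨B, hB⟩ := ContinuousMap.exists_restrict_eq (hVcl i)
      ((A i).comp ⟨inclusion (hVU i), continuous_inclusion (hVU i)⟩)
    exact ⟨B, fun p hp => DFunLike.congr_fun hB ⟨p, hp⟩⟩
  choose B hB using hext
  obtain ⟨z, hz⟩ := exists_add_ne_int
    (b := fun z i => (c i z - B i (F z)).im / (2 * Real.pi))
    (continuous_pi fun i => by fun_prop)
    (fun v hv z => by simp only [hF v hv, hcp _ v hv])
  obtain ⟨i, hi⟩ := mem_iUnion.1 ((hVc ▸ mem_univ (F z)) : F z ∈ iUnion V)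
  have h1 := hA i ⟨F z, hVU i hi⟩
  rw [← hB i _ hi, h i z, mul_left_inj' (hf _ _), Complex.exp_eq_exp_iff_exists_int] at h1
  obtain ⟨k, hk⟩ := h1
  refine hz i k ?_
  have h2 := congrArg Complex.im hk
  simp at h2
  field_simp
  simp only [Complex.sub_im]
  linarith

theorem not_hasTCCover_of_torus {X ι : Type*} [TopologicalSpace X] [NormalSpace (X × X)] [Fintype ι]
    (f : ι → C(X, ℂ)) (hf : ∀ i x, f i x ≠ 0) (F : C(ι → ℝ, X × X)) (hF : LatticePeriodic F)
    (c : ι → (ι → ℝ) → ℂ) (hc : ∀ i, Continuous (c i)) (hcp : ∀ i, LatticePeriodic (c i))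
    (h : ∀ i z, f i (F z).2 =
      Complex.exp (2 * Real.pi * Complex.I * z i + c i z) * f i (F z).1)
    {k : ℕ} (hk : k ≤ Fintype.card ι) : ¬ HasTCCover X k := by
  rintro ⟨U, hUo, hUc, hUs⟩
  obtain ⟨e⟩ : Nonempty (Fin k ↪ ι) := by
    rw [Function.Embedding.nonempty_iff_card_le]
    simpa using hk
  have key : ∀ (P : Set (X × X) → Prop), P ∅ → (∀ j, P (U j)) →
      ∀ i, P (Function.extend e U (fun _ => ∅) i) := by
    intro P h0 hP i
    by_cases hi : ∃ j, e j = i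
    · obtain ⟨j, rfl⟩ := hi
      rw [e.injective.extend_apply]
      exact hP j
    · rw [Function.extend_apply' _ _ _ hi]
      exact h0
  refine not_cover_of_torus f hf F hF c hc hcp h (Function.extend e U fun _ => ∅)
    (key _ isOpen_empty hUo) (eq_univ_of_univ_subset ?_)
    (key _ (hasMotionPlanningSection_empty X) hUs)
  rw [← hUc]
  refine iUnion_subset fun j => ?_
  refine subset_trans ?_ (subset_iUnion _ (e j))
  rw [e.injective.extend_apply]

end ToricObstruction

section PlanarTorus

open Set Topology Complex

/-- Configurations of `n` distinct points in the complex plane. -/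
abbrev ComplexConf (n : ℕ) := {z : Fin n → ℂ // Function.Injective z}

@[fun_prop]
lemma continuous_complexConf_apply {n : ℕ} (i : Fin n) :
    Continuous fun x : ComplexConf n => x.1 i :=
  (continuous_apply i).comp continuous_subtype_val

/-- The point of the unit circle with argument `2πt`. -/
noncomputable def unitExp (t : ℝ) : ℂ := exp (2 * Real.pi * I * t)

@[fun_prop]
lemma continuous_unitExp : Continuous unitExp := by
  unfold unitExp
  fun_prop

lemma unitExp_add (s t : ℝ) : unitExp (s + t) = unitExp s * unitExp t := by
  rw [unitExp, unitExp, unitExp, ← exp_add]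
  push_cast
  ring_nf

lemma unitExp_int (k : ℤ) : unitExp k = 1 :=
  exp_eq_one_iff.2 ⟨k, by push_cast; ring⟩

lemma unitExp_zero : unitExp 0 = 1 := by simp [unitExp]

lemma norm_unitExp (t : ℝ) : ‖unitExp t‖ = 1 := by
  have : (2 * Real.pi * I * t : ℂ) = ((2 * Real.pi * t : ℝ) : ℂ) * I := by push_cast; ring
  rw [unitExp, this, norm_exp_ofReal_mul_I]

lemma sub_mul_unitExp_mem_slitPlane {r R : ℝ} (hr : 0 ≤ r) (h : r < R) (t : ℝ) :
    (R : ℂ) - r * unitExp t ∈ slitPlane := by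
  left
  have h1 : (r * unitExp t : ℂ).re ≤ r := by
    refine (re_le_norm _).trans ?_
    rw [norm_mul, norm_unitExp, mul_one, norm_real, Real.norm_eq_abs, abs_of_nonneg hr]
  rw [sub_re, ofReal_re]
  linarith

/-- Points on concentric circles of radii `r i`. -/
noncomputable def circleConf {n : ℕ} (r : Fin n → ℝ) (α : Fin n → ℝ) (hr : ∀ i, 0 ≤ r i)
    (hinj : Function.Injective r) : ComplexConf n :=
  ⟨fun i => r i * unitExp (α i), fun i j hij => hinj <| by
    have := congrArg norm hij
    simpa [norm_unitExp, abs_of_nonneg (hr _)] using this⟩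

variable (N : ℕ)

/-- The radii of the orbits of the first system: the point `0` is outermost, the last point
is at the centre. -/
def innerRadius (i : Fin (N + 2)) : ℝ :=
  if i = 0 then N + 2 else if i = Fin.last (N + 1) then 0 else i

lemma innerRadius_zero : innerRadius N 0 = N + 2 := by simp [innerRadius]

lemma innerRadius_last : innerRadius N (Fin.last (N + 1)) = 0 := by
  simp [innerRadius, Fin.ext_iff]

lemma innerRadius_castSucc_succ (b : Fin N) : innerRadius N b.castSucc.succ = b + 1 := by
  have h1 : (b.castSucc.succ : Fin (N + 2)) ≠ 0 := Fin.succ_ne_zero _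
  have h2 : (b.castSucc.succ : Fin (N + 2)) ≠ Fin.last (N + 1) := by
    simp [Fin.ext_iff, b.2.ne]
  simp [innerRadius, h1, h2]

lemma innerRadius_nonneg (i : Fin (N + 2)) : 0 ≤ innerRadius N i := by
  unfold innerRadius
  split_ifs <;> positivity

lemma innerRadius_succ_lt (i : Fin (N + 1)) : innerRadius N i.succ < N + 2 := by
  induction i using Fin.lastCases with
  | last => rw [Fin.succ_last, innerRadius_last]; positivity
  | cast b =>
    rw [innerRadius_castSucc_succ]
    have : (b : ℝ) < N := by exact_mod_cast b.2
    linarith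

lemma innerRadius_injective : Function.Injective (innerRadius N) := by
  intro i j h
  induction i using Fin.cases with
  | zero =>
    induction j using Fin.cases with
    | zero => rfl
    | succ j => exact absurd (h.symm.trans (innerRadius_zero N)) (innerRadius_succ_lt N j).ne
  | succ i =>
    induction j using Fin.cases with
    | zero => exact absurd (h.trans (innerRadius_zero N)) (innerRadius_succ_lt N i).ne
    | succ j =>
      congr 1
      induction i using Fin.lastCases with
      | last =>
        induction j using Fin.lastCases with
        | last => rfl
        | cast j =>
          rw [Fin.succ_last, innerRadius_last, innerRadius_castSucc_succ] at h
          have : (0 : ℝ) ≤ j := by positivity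
          linarith
      | cast i =>
        induction j using Fin.lastCases with
        | last =>
          rw [Fin.succ_last, innerRadius_last, innerRadius_castSucc_succ] at h
          have : (0 : ℝ) ≤ i := by positivity
          linarith
        | cast j =>
          rw [innerRadius_castSucc_succ, innerRadius_castSucc_succ] at h
          have : (i : ℝ) = j := by linarith
          rw [Fin.ext (Nat.cast_injective this)]

variable {N}

/-- The angles of the first system of orbiting points. -/
def innerAngle (z : Fin (N + 1) ⊕ Fin N → ℝ) : Fin (N + 2) → ℝ :=
  Fin.cons 0 (Fin.lastCases 0 fun b => z (.inl (Fin.last N)) - z (.inr b))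

/-- The angles of the second system of orbiting points. -/
def outerAngle (z : Fin (N + 1) ⊕ Fin N → ℝ) : Fin (N + 2) → ℝ :=
  Fin.cons 0 fun a => z (.inl a)

lemma continuous_innerAngle (i : Fin (N + 2)) :
    Continuous fun z : Fin (N + 1) ⊕ Fin N → ℝ => innerAngle z i := by
  induction i using Fin.cases with
  | zero => simpa [innerAngle] using continuous_const
  | succ i =>
    induction i using Fin.lastCases with
    | last => simpa [innerAngle] using continuous_const
    | cast b => simp only [innerAngle, Fin.cons_succ, Fin.lastCases_castSucc]; fun_prop

lemma continuous_outerAngle (i : Fin (N + 2)) :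
    Continuous fun z : Fin (N + 1) ⊕ Fin N → ℝ => outerAngle z i := by
  induction i using Fin.cases with
  | zero => simpa [outerAngle] using continuous_const
  | succ i => simp only [outerAngle, Fin.cons_succ]; fun_prop

lemma unitExp_innerAngle_periodic (i : Fin (N + 2)) :
    LatticePeriodic fun z : Fin (N + 1) ⊕ Fin N → ℝ => unitExp (innerAngle z i) := by
  refine latticePeriodic_iff.2 fun k z => ?_
  induction i using Fin.cases with
  | zero => simp [innerAngle]
  | succ i =>
    induction i using Fin.lastCases with
    | last => simp [innerAngle]
    | cast b =>
      simp only [innerAngle, Fin.cons_succ, Fin.lastCases_castSucc, Pi.add_apply]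
      rw [add_sub_add_comm, unitExp_add, ← Int.cast_sub, unitExp_int, one_mul]

lemma unitExp_outerAngle_periodic (i : Fin (N + 2)) :
    LatticePeriodic fun z : Fin (N + 1) ⊕ Fin N → ℝ => unitExp (outerAngle z i) := by
  refine latticePeriodic_iff.2 fun k z => ?_
  induction i using Fin.cases with
  | zero => simp [outerAngle]
  | succ i =>
    simp only [outerAngle, Fin.cons_succ, Pi.add_apply]
    rw [unitExp_add, unitExp_int, one_mul]

/-- A torus of pairs of planetary systems. -/
noncomputable def planetaryTorus (N : ℕ) :
    C(Fin (N + 1) ⊕ Fin N → ℝ, ComplexConf (N + 2) × ComplexConf (N + 2)) where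
  toFun z :=
    (circleConf (innerRadius N) (innerAngle z) (innerRadius_nonneg N) (innerRadius_injective N),
      circleConf (fun i => i) (outerAngle z) (fun _ => by positivity)
        fun _ _ h => Fin.ext (Nat.cast_injective h))
  continuous_toFun := by
    refine .prodMk (.subtype_mk (continuous_pi fun i => ?_) _)
      (.subtype_mk (continuous_pi fun i => ?_) _)
    · exact continuous_const.mul (continuous_unitExp.comp (continuous_innerAngle i))
    · exact continuous_const.mul (continuous_unitExp.comp (continuous_outerAngle i))

lemma planetaryTorus_periodic (N : ℕ) : LatticePeriodic (planetaryTorus N) := by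
  intro v hv z
  refine Prod.ext (Subtype.ext (funext fun i => ?_)) (Subtype.ext (funext fun i => ?_))
  · exact congrArg (fun w => (innerRadius N i : ℂ) * w) (unitExp_innerAngle_periodic i v hv z)
  · exact congrArg (fun w => (((i : ℕ) : ℝ) : ℂ) * w) (unitExp_outerAngle_periodic i v hv z)

/-- The pairs of points whose relative position is recorded by the coordinates of the torus. -/
def torusPair : Fin (N + 1) ⊕ Fin N → Fin (N + 2) × Fin (N + 2)
  | .inl a => (a.succ, 0)
  | .inr b => (b.castSucc.succ, Fin.last (N + 1))

lemma torusPair_ne (i : Fin (N + 1) ⊕ Fin N) : (torusPair i).1 ≠ (torusPair i).2 := by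
  rcases i with a | b
  · exact Fin.succ_ne_zero a
  · simp [torusPair, Fin.ext_iff, b.2.ne]

/-- The logarithm of the periodic part of the relative position. -/
noncomputable def torusLog (i : Fin (N + 1) ⊕ Fin N) (z : Fin (N + 1) ⊕ Fin N → ℝ) : ℂ :=
  match i with
  | .inl a => log (a + 1) + Real.pi * I -
      log ((N + 2 : ℝ) - innerRadius N a.succ * unitExp (innerAngle z a.succ))
  | .inr b => log ((N + 1 : ℝ) - (b + 1 : ℝ) *
      unitExp (z (.inl b.castSucc) - z (.inl (Fin.last N)))) + Real.pi * I - log (b + 1)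

lemma torusLog_slit_left (a : Fin (N + 1)) (t : ℝ) :
    ((N + 2 : ℝ) - innerRadius N a.succ * unitExp t : ℂ) ∈ slitPlane :=
  sub_mul_unitExp_mem_slitPlane (innerRadius_nonneg N _) (innerRadius_succ_lt N a) t

lemma torusLog_slit_right (b : Fin N) (t : ℝ) :
    ((N + 1 : ℝ) - (b + 1 : ℝ) * unitExp t : ℂ) ∈ slitPlane := by
  have := sub_mul_unitExp_mem_slitPlane (r := b + 1) (R := N + 1) (by positivity)
    (by have : (b : ℝ) < N := by exact_mod_cast b.2
        linarith) t
  exact_mod_cast this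

lemma continuous_torusLog (i : Fin (N + 1) ⊕ Fin N) : Continuous (torusLog i) := by
  rcases i with a | b
  · have := continuous_innerAngle a.succ
    exact continuous_const.sub (Continuous.clog (by fun_prop) fun z => torusLog_slit_left a _)
  · exact ((Continuous.clog (by fun_prop) fun z => torusLog_slit_right b _).add
      continuous_const).sub continuous_const

lemma torusLog_periodic (i : Fin (N + 1) ⊕ Fin N) : LatticePeriodic (torusLog i) := by
  rcases i with a | b
  · intro v hv z
    have := unitExp_innerAngle_periodic a.succ v hv z
    simp only [torusLog, this]
  · refine latticePeriodic_iff.2 fun k z => ?_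
    simp only [torusLog, Pi.add_apply]
    rw [add_sub_add_comm, unitExp_add, ← Int.cast_sub, unitExp_int, one_mul]

lemma planetaryTorus_sub (i : Fin (N + 1) ⊕ Fin N) (z : Fin (N + 1) ⊕ Fin N → ℝ) :
    (planetaryTorus N z).2.1 (torusPair i).1 - (planetaryTorus N z).2.1 (torusPair i).2 =
      exp (2 * Real.pi * I * z i + torusLog i z) *
        ((planetaryTorus N z).1.1 (torusPair i).1 - (planetaryTorus N z).1.1 (torusPair i).2) := by
  rw [exp_add]
  change _ = unitExp (z i) * _ * _
  rcases i with a | b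
  · have h1 := slitPlane_ne_zero (torusLog_slit_left a (innerAngle z a.succ))
    have h2 : ((a : ℂ) + 1) ≠ 0 := Nat.cast_add_one_ne_zero _
    simp only [torusLog, exp_sub, exp_add, exp_log h1, exp_log h2, exp_pi_mul_I]
    simp only [planetaryTorus, circleConf, torusPair, ContinuousMap.coe_mk, innerRadius_zero]
    simp only [innerAngle, outerAngle, Fin.cons_zero, Fin.cons_succ, unitExp_zero] at h1 ⊢
    push_cast at h1 ⊢
    field_simp
    simp
    ring
  · have h1 := slitPlane_ne_zero
      (torusLog_slit_right b (z (.inl b.castSucc) - z (.inl (Fin.last N))))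
    have h2 : ((b : ℂ) + 1) ≠ 0 := Nat.cast_add_one_ne_zero _
    have h3 : unitExp (z (.inl b.castSucc)) =
        unitExp (z (.inl b.castSucc) - z (.inl (Fin.last N))) *
          unitExp (z (.inl (Fin.last N))) := by
      rw [← unitExp_add, sub_add_cancel]
    have h4 : unitExp (z (.inl (Fin.last N))) =
        unitExp (z (.inl (Fin.last N)) - z (.inr b)) * unitExp (z (.inr b)) := by
      rw [← unitExp_add, sub_add_cancel]
    simp only [torusLog, exp_sub, exp_add, exp_log h1, exp_log h2, exp_pi_mul_I]
    simp only [planetaryTorus, circleConf, torusPair, ContinuousMap.coe_mk, innerRadius_last,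
      innerRadius_castSucc_succ]
    simp only [innerAngle, outerAngle, Fin.cons_succ, ← Fin.succ_last, Fin.lastCases_castSucc]
    rw [h3, h4]
    push_cast
    field_simp
    simp
    ring

/-- Lower bound for the topological complexity of planar configuration spaces. -/
theorem not_hasTCCover_complexConf {k : ℕ} (hk : k ≤ 2 * N + 1) :
    ¬ HasTCCover (ComplexConf (N + 2)) k :=
  not_hasTCCover_of_torus
    (fun i => ⟨fun x => x.1 (torusPair i).1 - x.1 (torusPair i).2,
      (continuous_complexConf_apply _).sub (continuous_complexConf_apply _)⟩)
    (fun i x => sub_ne_zero.2 (x.2.ne (torusPair_ne i)))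
    (planetaryTorus N) (planetaryTorus_periodic N) torusLog continuous_torusLog torusLog_periodic
    planetaryTorus_sub (by simp; omega)

end PlanarTorus

section Stratification

open Set Topology

lemma HasMotionPlanningSection.mono {X : Type*} [TopologicalSpace X] {U V : Set (X × X)}
    (hV : HasMotionPlanningSection X V) (h : U ⊆ V) : HasMotionPlanningSection X U := by
  obtain ⟨s, hs⟩ := hV
  exact ⟨s.comp ⟨inclusion h, continuous_inclusion h⟩, fun p => hs _⟩

lemma HasMotionPlanningSection.of_homotopic {X : Type*} [TopologicalSpace X] {U : Set (X × X)}
    {f g : C(U, X)} (h : f.Homotopic g) (hf : ∀ p : U, f p = p.1.1) (hg : ∀ p : U, g p = p.1.2) :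
    HasMotionPlanningSection X U := by
  obtain ⟨H⟩ := h
  refine ⟨(H.toContinuousMap.comp ContinuousMap.prodSwap).curry, fun p => ⟨?_, ?_⟩⟩
  · rw [← hf]
    exact H.apply_zero p
  · rw [← hg]
    exact H.apply_one p

lemma HasMotionPlanningSection.iUnion {X ι : Type*} [TopologicalSpace X] {O : ι → Set (X × X)}
    (hO : ∀ i, IsOpen (O i)) (hd : Pairwise fun i j => Disjoint (O i) (O j))
    (hs : ∀ i, HasMotionPlanningSection X (O i)) : HasMotionPlanningSection X (⋃ i, O i) := by
  choose s hs using hs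
  let S : ι → Set (⋃ i, O i : Set (X × X)) := fun i => Subtype.val ⁻¹' O i
  have hex : ∀ p : (⋃ i, O i : Set (X × X)), ∃ i, p.1 ∈ O i := fun p => mem_iUnion.1 p.2
  let φ : ∀ i, C(S i, PathSpace X) := fun i => (s i).comp ⟨fun p => ⟨p.1.1, p.2⟩, by fun_prop⟩
  have hφ : ∀ (i j) (p : (⋃ i, O i : Set (X × X))) (hi : p ∈ S i) (hj : p ∈ S j),
      φ i ⟨p, hi⟩ = φ j ⟨p, hj⟩ := by
    intro i j p hi hj
    by_cases hij : i = j
    · subst hij; rfl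
    · exact (disjoint_left.1 (hd hij) hi hj).elim
  have hS : ∀ p : (⋃ i, O i : Set (X × X)), ∃ i, S i ∈ 𝓝 p := fun p => by
    obtain ⟨i, hi⟩ := hex p
    exact ⟨i, ((hO i).preimage continuous_subtype_val).mem_nhds hi⟩
  refine ⟨ContinuousMap.liftCover S φ hφ hS, fun p => ?_⟩
  obtain ⟨i, hi⟩ := hex p
  have : ContinuousMap.liftCover S φ hφ hS p = s i ⟨p.1, hi⟩ :=
    ContinuousMap.liftCover_coe (⟨p, hi⟩ : S i)
  rw [this]
  exact hs i _

/-- A finite stratification of `X × X`, such that strata of the same level are separated and every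
stratum has a neighbourhood with a motion planner, yields a motion planner with one domain for each
level. -/
theorem hasTCCover_of_stratification {X T : Type*} [PseudoEMetricSpace X] [Finite T] {k : ℕ}
    (τ : X × X → T) (ℓ : X × X → Fin k)
    (hcl : ∀ w, ∀ z ∈ closure {p | τ p = τ w}, ℓ z = ℓ w → τ z = τ w)
    (hN : ∀ w, ∃ V, IsOpen V ∧ (∀ z, τ z = τ w → z ∈ V) ∧ HasMotionPlanningSection X V) :
    HasTCCover X k := by
  have hN' : ∀ t, ∃ V, IsOpen V ∧ (∀ z, τ z = t → z ∈ V) ∧ HasMotionPlanningSection X V := by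
    intro t
    by_cases ht : ∃ w, τ w = t
    · obtain ⟨w, rfl⟩ := ht
      exact hN w
    · exact ⟨∅, isOpen_empty, fun z hz => (ht ⟨z, hz⟩).elim, hasMotionPlanningSection_empty X⟩
  choose V hVo hVm hVs using hN'
  let E : Fin k → T → Set (X × X) := fun i t => {z | ℓ z = i ∧ τ z = t}
  let O : Fin k → T → Set (X × X) := fun i t =>
    V t ∩ ⋂ s : {s // s ≠ t}, {z | Metric.infEDist z (E i t) < Metric.infEDist z (E i s)}
  have hO : ∀ i t, IsOpen (O i t) := fun i t =>
    (hVo t).inter (isOpen_iInter_of_finite fun s =>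
      isOpen_lt Metric.continuous_infEDist Metric.continuous_infEDist)
  refine ⟨fun i => ⋃ t, O i t, fun i => isOpen_iUnion (hO i), eq_univ_of_forall fun z => ?_,
    fun i => .iUnion (hO i) (fun t s hts => ?_) fun t => (hVs t).mono inter_subset_left⟩
  · refine mem_iUnion.2 ⟨ℓ z, mem_iUnion.2 ⟨τ z, hVm _ _ rfl, mem_iInter.2 fun s => ?_⟩⟩
    have h0 : Metric.infEDist z (E (ℓ z) (τ z)) = 0 := Metric.infEDist_zero_of_mem ⟨rfl, rfl⟩
    change Metric.infEDist z (E (ℓ z) (τ z)) < Metric.infEDist z (E (ℓ z) s)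
    rw [h0, pos_iff_ne_zero]
    intro h1
    have h2 : z ∈ closure (E (ℓ z) s) := Metric.mem_closure_iff_infEDist_zero.2 h1
    obtain ⟨w, hw⟩ := closure_nonempty_iff.1 ⟨z, h2⟩
    refine s.2 ?_
    rw [← hw.2]
    refine (hcl w z (closure_mono ?_ h2) hw.1.symm).symm
    intro p hp
    exact hp.2.trans hw.2.symm
  · change Disjoint (O i t) (O i s)
    rw [disjoint_left]
    intro z hz hz'
    have h1 : Metric.infEDist z (E i t) < Metric.infEDist z (E i s) :=
      mem_iInter.1 hz.2 ⟨s, hts.symm⟩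
    have h2 : Metric.infEDist z (E i s) < Metric.infEDist z (E i t) :=
      mem_iInter.1 hz'.2 ⟨t, hts⟩
    exact lt_asymm h1 h2

lemma HasTCCover.of_homeomorph {X Y : Type*} [TopologicalSpace X] [TopologicalSpace Y] (e : X ≃ₜ Y)
    {k : ℕ} (h : HasTCCover X k) : HasTCCover Y k := by
  obtain ⟨U, hUo, hUc, hUs⟩ := h
  refine ⟨fun i => Prod.map e.symm e.symm ⁻¹' U i, fun i => (hUo i).preimage (by fun_prop), ?_,
    fun i => ?_⟩
  · rw [← preimage_iUnion, hUc, preimage_univ]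
  · obtain ⟨s, hs⟩ := hUs i
    let j : C(Prod.map e.symm e.symm ⁻¹' U i, U i) :=
      ⟨fun p => ⟨Prod.map e.symm e.symm p.1, p.2⟩, by fun_prop⟩
    refine ⟨⟨fun p => (e : C(X, Y)).comp (s (j p)), by fun_prop⟩, fun p => ⟨?_, ?_⟩⟩
    · change e (s (j p) 0) = p.1.1
      rw [(hs (j p)).1]
      exact e.apply_symm_apply _
    · change e (s (j p) 1) = p.1.2
      rw [(hs (j p)).2]
      exact e.apply_symm_apply _

end Stratification

section CellDecomposition

open Set Topology Complex

/-- The combinatorial type of `y` for the lexicographic order of the complex plane. -/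
def cellType {n : ℕ} (y : Fin n → ℂ) (i j : Fin n) : Prop × Prop :=
  ((y i).re ≤ (y j).re, (y i).re = (y j).re → (y i).im ≤ (y j).im)

/-- `x` satisfies all the weak inequalities valid on the cell of `w`. -/
def Degenerates {n : ℕ} (w x : Fin n → ℂ) : Prop :=
  ∀ i j, ((w i).re ≤ (w j).re → (x i).re ≤ (x j).re) ∧
    ((w i).re = (w j).re → (w i).im ≤ (w j).im → (x i).im ≤ (x j).im)

/-- The number of vertical lines meeting the set of values of `y`. -/
noncomputable def numColumns {n : ℕ} (y : Fin n → ℂ) : ℕ :=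
  (Finset.univ.image fun i => (y i).re).card

lemma cellType_eq_iff {n : ℕ} {y b : Fin n → ℂ} :
    cellType y = cellType b ↔ ∀ i j, ((y i).re ≤ (y j).re ↔ (b i).re ≤ (b j).re) ∧
      (((y i).re = (y j).re → (y i).im ≤ (y j).im) ↔
        ((b i).re = (b j).re → (b i).im ≤ (b j).im)) := by
  simp only [funext_iff, cellType, Prod.mk.injEq, eq_iff_iff]

lemma eq_zero_of_segment {a b t : ℝ} (h0 : 0 ≤ t) (h1 : t ≤ 1) (hle : a ≤ 0 ↔ b ≤ 0)
    (hge : 0 ≤ a ↔ 0 ≤ b) (h : (1 - t) * a + t * b = 0) : a = 0 := by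
  rcases h0.eq_or_lt with rfl | h0
  · simpa using h
  rcases lt_trichotomy a 0 with ha | ha | ha
  · have hb : b < 0 := not_le.1 fun hb => ha.not_ge (hge.2 hb)
    linarith [mul_nonpos_of_nonneg_of_nonpos (sub_nonneg.2 h1) ha.le, mul_neg_of_pos_of_neg h0 hb]
  · exact ha
  · have hb : 0 < b := not_le.1 fun hb => ha.not_ge (hle.2 hb)
    linarith [mul_nonneg (sub_nonneg.2 h1) ha.le, mul_pos h0 hb]

lemma injective_segment_of_cellType_eq {n : ℕ} {y b : Fin n → ℂ} (hy : Function.Injective y)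
    (h : cellType y = cellType b) {t : ℝ} (h0 : 0 ≤ t) (h1 : t ≤ 1) :
    Function.Injective fun i => (1 - t : ℂ) * y i + t * b i := by
  rw [cellType_eq_iff] at h
  intro i j hij
  have hre := congrArg re hij
  have him := congrArg im hij
  simp at hre him
  have e1 : (y i).re - (y j).re = 0 := by
    refine eq_zero_of_segment (b := (b i).re - (b j).re) h0 h1 ?_ ?_ (by linarith)
    · simpa using (h i j).1
    · simpa using (h j i).1
  have e2 : (b i).re - (b j).re = 0 := by
    have h2 := (h i j).1
    have h3 := (h j i).1
    linarith [h2.1 (by linarith), h3.1 (by linarith)]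
  rw [sub_eq_zero] at e1 e2
  refine hy (Complex.ext e1 ?_)
  rw [← sub_eq_zero]
  refine eq_zero_of_segment (b := (b i).im - (b j).im) h0 h1 ?_ ?_ (by linarith)
  · simpa [e1, e2] using (h i j).2
  · simpa [e1, e2] using (h j i).2

lemma Degenerates.re_eq {n : ℕ} {w x : Fin n → ℂ} (h : Degenerates w x) {i j : Fin n}
    (hij : (w i).re = (w j).re) : (x i).re = (x j).re :=
  le_antisymm ((h i j).1 hij.le) ((h j i).1 hij.ge)

lemma Degenerates.exists_factor {n : ℕ} {w x : Fin n → ℂ} (h : Degenerates w x) :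
    ∃ f : ℝ → ℝ, (∀ i, f (w i).re = (x i).re) ∧
      numColumns x = ((Finset.univ.image fun i => (w i).re).image f).card := by
  have hf := Function.FactorsThrough.extend_apply (g := fun i => (x i).re)
    (f := fun i => (w i).re) (fun i j hij => h.re_eq hij) 0
  refine ⟨_, hf, ?_⟩
  rw [Finset.image_image, numColumns]
  simp only [Function.comp_def, hf]

lemma Degenerates.numColumns_le {n : ℕ} {w x : Fin n → ℂ} (h : Degenerates w x) :
    numColumns x ≤ numColumns w := by
  obtain ⟨f, -, hf⟩ := h.exists_factor
  rw [hf]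
  exact Finset.card_image_le

lemma Degenerates.cellType_eq {n : ℕ} {w x : Fin n → ℂ} (h : Degenerates w x)
    (hx : Function.Injective x) (hc : numColumns x = numColumns w) : cellType x = cellType w := by
  have key : ∀ i j, (x i).re = (x j).re → (w i).re = (w j).re := by
    obtain ⟨f, hf, hfc⟩ := h.exists_factor
    rw [hfc, numColumns, Finset.card_image_iff] at hc
    intro i j hij
    rw [← hf, ← hf] at hij
    exact hc (by simp) (by simp) hij
  rw [cellType_eq_iff]
  refine fun i j => ⟨⟨fun hij => ?_, (h i j).1⟩, ⟨fun hij he => ?_, fun hij he => ?_⟩⟩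
  · rcases le_total (w i).re (w j).re with h1 | h1
    · exact h1
    · exact (key i j (le_antisymm hij ((h j i).1 h1))).le
  · rcases le_total (w i).im (w j).im with h1 | h1
    · exact h1
    · have e := h.re_eq he
      have : i = j := hx (Complex.ext e (le_antisymm (hij e) ((h j i).2 he.symm h1)))
      rw [this]
  · exact (h i j).2 (key i j he) (hij (key i j he))

lemma degenerates_of_mem_closure {n : ℕ} {Z : Type*} [TopologicalSpace Z] {Y : Z → Fin n → ℂ}
    (hY : Continuous Y) {w z : Z} (h : z ∈ closure {p | cellType (Y p) = cellType (Y w)}) :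
    Degenerates (Y w) (Y z) := by
  have hc (i : Fin n) : Continuous fun p => Y p i := (continuous_apply i).comp hY
  intro i j
  constructor
  · intro hw
    refine closure_minimal (t := {p | (Y p i).re ≤ (Y p j).re}) (fun p hp => ?_)
      (isClosed_le (continuous_re.comp (hc i)) (continuous_re.comp (hc j))) h
    exact ((cellType_eq_iff.1 hp i j).1).2 hw
  · intro he hw
    refine closure_minimal (t := {p | (Y p i).im ≤ (Y p j).im}) (fun p hp => ?_)
      (isClosed_le (continuous_im.comp (hc i)) (continuous_im.comp (hc j))) h
    have hp := cellType_eq_iff.1 hp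
    exact ((hp i j).2.2 fun _ => hw)
      (le_antisymm ((hp i j).1.2 he.le) ((hp j i).1.2 he.ge))

end CellDecomposition

section PlanarMotion

open Set Topology Complex

lemma isOpen_setOf_injective {n : ℕ} : IsOpen {f : Fin n → ℂ | Function.Injective f} := by
  have : {f : Fin n → ℂ | Function.Injective f} = ⋂ i, ⋂ j, {f | f i = f j → i = j} := by
    ext f
    simp [Function.Injective]
  rw [this]
  refine isOpen_iInter_of_finite fun i => isOpen_iInter_of_finite fun j => ?_
  by_cases hij : i = j
  · simp [hij]
  · simpa [hij] using isOpen_ne_fun (continuous_apply i) (continuous_apply j)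

lemma isOpen_forall_injective {n : ℕ} {Z : Type*} [TopologicalSpace Z]
    {K : unitInterval × Z → Fin n → ℂ} (hK : Continuous K) :
    IsOpen {z | ∀ t, Function.Injective (K (t, z))} := by
  have h : IsClosed (Prod.snd '' (K ⁻¹' {f | Function.Injective f})ᶜ) :=
    isClosedMap_snd_of_compactSpace _ (isOpen_setOf_injective.preimage hK).isClosed_compl
  convert h.isOpen_compl using 1
  ext z
  simp

/-- The configuration obtained from `c z` by multiplication with `u z`. -/
noncomputable def scaledConf {n : ℕ} {Z : Type*} [TopologicalSpace Z] (u : C(Z, ℂ))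
    (c : C(Z, Fin n → ℂ)) (hu : ∀ z, u z ≠ 0) (hc : ∀ z, Function.Injective (c z)) :
    C(Z, ComplexConf n) where
  toFun z := ⟨fun i => u z * c z i, fun i j hij => hc z (mul_left_cancel₀ (hu z) hij)⟩
  continuous_toFun := by fun_prop

lemma scaledConf_homotopic {n : ℕ} {Z : Type*} [TopologicalSpace Z] {u u' : C(Z, ℂ)}
    {c c' : C(Z, Fin n → ℂ)} {hu : ∀ z, u z ≠ 0} {hc : ∀ z, Function.Injective (c z)}
    {hu' : ∀ z, u' z ≠ 0} {hc' : ∀ z, Function.Injective (c' z)} (U : C(unitInterval × Z, ℂ))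
    (K : C(unitInterval × Z, Fin n → ℂ)) (hU : ∀ p, U p ≠ 0) (hK : ∀ p, Function.Injective (K p))
    (hU0 : ∀ z, U (0, z) = u z) (hU1 : ∀ z, U (1, z) = u' z)
    (hK0 : ∀ z, K (0, z) = c z) (hK1 : ∀ z, K (1, z) = c' z) :
    (scaledConf u c hu hc).Homotopic (scaledConf u' c' hu' hc') := by
  refine ⟨⟨scaledConf U K hU hK, fun z => ?_, fun z => ?_⟩⟩
  · exact Subtype.ext (funext fun i => by simp [scaledConf, hU0, hK0])
  · exact Subtype.ext (funext fun i => by simp [scaledConf, hU1, hK1])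

lemma scaledConf_homotopic_segment {n : ℕ} {Z : Type*} [TopologicalSpace Z] {u : C(Z, ℂ)}
    {c c' : C(Z, Fin n → ℂ)} {hu : ∀ z, u z ≠ 0} {hc : ∀ z, Function.Injective (c z)}
    {hc' : ∀ z, Function.Injective (c' z)}
    (h : ∀ (t : unitInterval) z,
      Function.Injective fun i => (1 - (t : ℝ) : ℂ) * c z i + (t : ℝ) * c' z i) :
    (scaledConf u c hu hc).Homotopic (scaledConf u c' hu hc') :=
  scaledConf_homotopic (u.comp .snd)
    ⟨fun p i => (1 - (p.1 : ℝ) : ℂ) * c p.2 i + (p.1 : ℝ) * c' p.2 i, by fun_prop⟩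
    (fun p => hu _) (fun p => h _ _) (fun z => rfl) (fun z => rfl)
    (fun z => by ext; simp) (fun z => by ext; simp)

lemma exists_path_injective {n : ℕ} {b b' : Fin n → ℂ} (hb : Function.Injective b)
    (hb' : Function.Injective b') :
    ∃ γ : C(unitInterval, ℂ), γ 0 = 0 ∧ γ 1 = 1 ∧
      ∀ t, Function.Injective fun i => b i + γ t * (b' i - b i) := by
  let S : Set ℂ := {s | Function.Injective fun i => b i + s * (b' i - b i)}
  have hS : Sᶜ.Countable := by
    have hsub : Sᶜ ⊆ ⋃ i, ⋃ j, {s | i ≠ j ∧ b i + s * (b' i - b i) = b j + s * (b' j - b j)} := by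
      intro s hs
      simp only [S, mem_compl_iff, mem_ofPred_eq, Function.Injective, not_forall] at hs
      obtain ⟨i, j, h, hij⟩ := hs
      exact mem_iUnion.2 ⟨i, mem_iUnion.2 ⟨j, hij, h⟩⟩
    refine Countable.mono hsub (countable_iUnion fun i => countable_iUnion fun j => ?_)
    refine Set.Subsingleton.countable ?_
    rintro s ⟨hij, hs⟩ t ⟨-, ht⟩
    have hne : (b' i - b i) - (b' j - b j) ≠ 0 := by
      intro h0
      refine hij (hb ?_)
      linear_combination hs - s * h0
    refine mul_right_cancel₀ hne ?_
    linear_combination hs - ht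
  have hpc : IsPathConnected S := by
    have := hS.isPathConnected_compl_of_one_lt_rank (by rw [rank_real_complex]; norm_num)
    rwa [compl_compl] at this
  have h0 : (0 : ℂ) ∈ S := by simpa [S] using hb
  have h1 : (1 : ℂ) ∈ S := by simpa [S] using hb'
  obtain ⟨γ, hγ⟩ := hpc.joinedIn 0 h0 1 h1
  exact ⟨γ, γ.source, γ.target, hγ⟩

lemma scaledConf_homotopic_const {n : ℕ} {Z : Type*} [TopologicalSpace Z] {u : C(Z, ℂ)}
    {hu : ∀ z, u z ≠ 0} {b b' : Fin n → ℂ} (hb : Function.Injective b)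
    (hb' : Function.Injective b') :
    (scaledConf u (.const Z b) hu fun _ => hb).Homotopic
      (scaledConf u (.const Z b') hu fun _ => hb') := by
  obtain ⟨γ, h0, h1, hγ⟩ := exists_path_injective hb hb'
  exact scaledConf_homotopic (u.comp .snd)
    ⟨fun p i => b i + γ p.1 * (b' i - b i), by fun_prop⟩
    (fun p => hu _) (fun p => hγ _) (fun z => rfl) (fun z => rfl)
    (fun z => by ext; simp [h0]) (fun z => by ext; simp [h1])

lemma scaledConf_homotopic_of_slitPlane {n : ℕ} {Z : Type*} [TopologicalSpace Z] {u u' : C(Z, ℂ)}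
    {c : C(Z, Fin n → ℂ)} {hu : ∀ z, u z ≠ 0} {hu' : ∀ z, u' z ≠ 0}
    {hc : ∀ z, Function.Injective (c z)} (h : ∀ z, u' z / u z ∈ slitPlane) :
    (scaledConf u c hu hc).Homotopic (scaledConf u' c hu' hc) := by
  refine scaledConf_homotopic ⟨fun p => u p.2 + (p.1 : ℝ) * (u' p.2 - u p.2), by fun_prop⟩
    (c.comp .snd) (fun p => ?_) (fun p => hc _) (fun z => by simp) (fun z => by simp)
    (fun z => rfl) (fun z => rfl)
  have h1 : (1 : ℂ) + (p.1 : ℝ) • (u' p.2 / u p.2 - 1) ∈ slitPlane := by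
    refine starConvex_one_slitPlane.add_smul_mem ?_ p.1.2.1 p.1.2.2
    simpa using h p.2
  have h2 : u p.2 + (p.1 : ℝ) * (u' p.2 - u p.2)
      = u p.2 * ((1 : ℂ) + (p.1 : ℝ) • (u' p.2 / u p.2 - 1)) := by
    have := hu p.2
    simp only [real_smul]
    field_simp
  change u p.2 + (p.1 : ℝ) * (u' p.2 - u p.2) ≠ 0
  rw [h2]
  exact mul_ne_zero (hu _) (slitPlane_ne_zero h1)

lemma scaledConf_homotopic_neg {n : ℕ} {Z : Type*} [TopologicalSpace Z] {u : C(Z, ℂ)}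
    {c : C(Z, Fin n → ℂ)} {hu : ∀ z, u z ≠ 0} {hu' : ∀ z, (-u) z ≠ 0}
    {hc : ∀ z, Function.Injective (c z)} :
    (scaledConf u c hu hc).Homotopic (scaledConf (-u) c hu' hc) :=
  scaledConf_homotopic ⟨fun p => exp (Real.pi * I * (p.1 : ℝ)) * u p.2, by fun_prop⟩
    (c.comp .snd) (fun p => mul_ne_zero (exp_ne_zero _) (hu _)) (fun p => hc _)
    (fun z => by simp) (fun z => by simp [exp_pi_mul_I]) (fun z => rfl) (fun z => rfl)

lemma neg_mem_slitPlane_of_notMem {z : ℂ} (h0 : z ≠ 0) (h : z ∉ slitPlane) :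
    -z ∈ slitPlane := by
  rw [mem_slitPlane_iff, not_or, not_lt, not_not] at h
  refine Or.inl ?_
  rw [neg_re, neg_pos]
  exact lt_of_le_of_ne h.1 fun hre => h0 (Complex.ext hre h.2)

end PlanarMotion

section UpperBound

open Set Topology Complex

/-- The vector from the first to the second point. -/
def firstEdge {N : ℕ} (x : ComplexConf (N + 2)) : ℂ := x.1 1 - x.1 0

@[fun_prop]
lemma continuous_firstEdge {N : ℕ} : Continuous (firstEdge (N := N)) := by
  unfold firstEdge
  fun_prop

lemma firstEdge_ne_zero {N : ℕ} (x : ComplexConf (N + 2)) : firstEdge x ≠ 0 :=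
  sub_ne_zero.2 fun h => one_ne_zero (x.2 h)

/-- The configuration rotated and rescaled so that the first edge is `1`. -/
noncomputable def shape {N : ℕ} (x : ComplexConf (N + 2)) (i : Fin (N + 2)) : ℂ :=
  x.1 i / firstEdge x

@[fun_prop]
lemma continuous_shape {N : ℕ} : Continuous (shape (N := N)) := by
  unfold shape
  exact continuous_pi fun i =>
    (continuous_complexConf_apply i).div continuous_firstEdge firstEdge_ne_zero

lemma shape_injective {N : ℕ} (x : ComplexConf (N + 2)) : Function.Injective (shape x) :=
  fun _ _ h => x.2 ((div_left_inj' (firstEdge_ne_zero x)).1 h)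

lemma firstEdge_mul_shape {N : ℕ} (x : ComplexConf (N + 2)) (i : Fin (N + 2)) :
    firstEdge x * shape x i = x.1 i :=
  mul_div_cancel₀ _ (firstEdge_ne_zero x)

lemma two_le_numColumns_shape {N : ℕ} (x : ComplexConf (N + 2)) : 2 ≤ numColumns (shape x) := by
  refine Finset.one_lt_card.2 ⟨(shape x 0).re, by simp, (shape x 1).re, by simp, fun h => ?_⟩
  have h1 : shape x 1 - shape x 0 = 1 := by
    rw [shape, shape, ← sub_div]
    exact div_self (firstEdge_ne_zero x)
  have h2 := congrArg re h1
  rw [sub_re, h] at h2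
  simp at h2

lemma numColumns_le {n : ℕ} (y : Fin n → ℂ) : numColumns y ≤ n :=
  Finset.card_image_le.trans_eq (by simp)

/-- The first edges of the two configurations point in opposite directions. -/
def AreOpposite {N : ℕ} (p : ComplexConf (N + 2) × ComplexConf (N + 2)) : Prop :=
  firstEdge p.2 / firstEdge p.1 ∉ slitPlane

lemma continuous_edgeRatio {N : ℕ} :
    Continuous fun p : ComplexConf (N + 2) × ComplexConf (N + 2) =>
      firstEdge p.2 / firstEdge p.1 :=
  (continuous_firstEdge.comp continuous_snd).div (continuous_firstEdge.comp continuous_fst)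
    fun p => firstEdge_ne_zero p.1

lemma isClosed_areOpposite {N : ℕ} :
    IsClosed {p : ComplexConf (N + 2) × ComplexConf (N + 2) | AreOpposite p} :=
  (isOpen_slitPlane.preimage continuous_edgeRatio).isClosed_compl

/-- The pairs of configurations whose shapes can be moved straight to `b` and `b'`. -/
noncomputable def shapeNhd {N : ℕ} (b b' : Fin (N + 2) → ℂ) :
    Set (ComplexConf (N + 2) × ComplexConf (N + 2)) :=
  {p | (∀ t : unitInterval,
      Function.Injective fun i => (1 - (t : ℝ) : ℂ) * shape p.1 i + (t : ℝ) * b i) ∧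
    ∀ t : unitInterval,
      Function.Injective fun i => (1 - (t : ℝ) : ℂ) * shape p.2 i + (t : ℝ) * b' i}

lemma isOpen_shapeNhd {N : ℕ} (b b' : Fin (N + 2) → ℂ) : IsOpen (shapeNhd b b') := by
  refine IsOpen.inter ?_ ?_
  · exact isOpen_forall_injective (K := fun q : unitInterval × (ComplexConf (N + 2) × _) => fun i =>
      (1 - (q.1 : ℝ) : ℂ) * shape q.2.1 i + (q.1 : ℝ) * b i) (by fun_prop)
  · exact isOpen_forall_injective (K := fun q : unitInterval × (_ × ComplexConf (N + 2)) => fun i =>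
      (1 - (q.1 : ℝ) : ℂ) * shape q.2.2 i + (q.1 : ℝ) * b' i) (by fun_prop)

lemma hasMotionPlanningSection_of_subset_shapeNhd {N : ℕ} {b b' : Fin (N + 2) → ℂ}
    (hb : Function.Injective b) (hb' : Function.Injective b')
    {V : Set (ComplexConf (N + 2) × ComplexConf (N + 2))} (hV : V ⊆ shapeNhd b b')
    (hs : (∀ p ∈ V, firstEdge p.2 / firstEdge p.1 ∈ slitPlane) ∨
      ∀ p ∈ V, -(firstEdge p.2 / firstEdge p.1) ∈ slitPlane) :
    HasMotionPlanningSection (ComplexConf (N + 2)) V := by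
  let u : C(V, ℂ) := ⟨fun p => firstEdge p.1.1, by fun_prop⟩
  let u' : C(V, ℂ) := ⟨fun p => firstEdge p.1.2, by fun_prop⟩
  let c : C(V, Fin (N + 2) → ℂ) := ⟨fun p => shape p.1.1, by fun_prop⟩
  let c' : C(V, Fin (N + 2) → ℂ) := ⟨fun p => shape p.1.2, by fun_prop⟩
  have hu : ∀ p, u p ≠ 0 := fun p => firstEdge_ne_zero _
  have hu' : ∀ p, u' p ≠ 0 := fun p => firstEdge_ne_zero _
  have hc : ∀ p, Function.Injective (c p) := fun p => shape_injective _
  have hc' : ∀ p, Function.Injective (c' p) := fun p => shape_injective _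
  have h1 : (scaledConf u c hu hc).Homotopic (scaledConf u (.const V b) hu fun _ => hb) :=
    scaledConf_homotopic_segment fun t p => (hV p.2).1 t
  have h2 : (scaledConf u (.const V b) hu fun _ => hb).Homotopic
      (scaledConf u (.const V b') hu fun _ => hb') := scaledConf_homotopic_const hb hb'
  have h4 : (scaledConf u' c' hu' hc').Homotopic (scaledConf u' (.const V b') hu' fun _ => hb') :=
    scaledConf_homotopic_segment fun t p => (hV p.2).2 t
  have h3 : (scaledConf u (.const V b') hu fun _ => hb').Homotopic
      (scaledConf u' (.const V b') hu' fun _ => hb') := by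
    rcases hs with hs | hs
    · exact scaledConf_homotopic_of_slitPlane fun p => hs p p.2
    · refine (scaledConf_homotopic_neg (hu' := fun p => neg_ne_zero.2 (hu p))).trans
        (scaledConf_homotopic_of_slitPlane fun p => ?_)
      change u' p / -u p ∈ slitPlane
      rw [div_neg]
      exact hs p p.2
  refine .of_homotopic ((h1.trans h2).trans (h3.trans h4.symm)) (fun p => ?_) fun p => ?_
  · exact Subtype.ext (funext fun i => firstEdge_mul_shape _ i)
  · exact Subtype.ext (funext fun i => firstEdge_mul_shape _ i)

open Classical in
/-- The codimension of the stratum of `p`. -/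
noncomputable def stratumLevel {N : ℕ} (p : ComplexConf (N + 2) × ComplexConf (N + 2)) : ℕ :=
  (N + 2 - numColumns (shape p.1)) + (N + 2 - numColumns (shape p.2)) +
    if AreOpposite p then 1 else 0

lemma stratumLevel_lt {N : ℕ} (p : ComplexConf (N + 2) × ComplexConf (N + 2)) :
    stratumLevel p < 2 * N + 2 := by
  have h1 := two_le_numColumns_shape p.1
  have h2 := two_le_numColumns_shape p.2
  unfold stratumLevel
  split_ifs <;> omega

/-- The combinatorial type of a pair of configurations. -/
noncomputable def stratumType {N : ℕ} (p : ComplexConf (N + 2) × ComplexConf (N + 2)) :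
    ((Fin (N + 2) → Fin (N + 2) → Prop × Prop) × (Fin (N + 2) → Fin (N + 2) → Prop × Prop)) ×
      Prop :=
  ((cellType (shape p.1), cellType (shape p.2)), AreOpposite p)

lemma stratumType_eq_iff {N : ℕ} {p q : ComplexConf (N + 2) × ComplexConf (N + 2)} :
    stratumType p = stratumType q ↔ (cellType (shape p.1) = cellType (shape q.1) ∧
      cellType (shape p.2) = cellType (shape q.2)) ∧ (AreOpposite p ↔ AreOpposite q) := by
  simp only [stratumType, Prod.mk.injEq, eq_iff_iff]

lemma stratumType_eq_of_mem_closure {N : ℕ} {w z : ComplexConf (N + 2) × ComplexConf (N + 2)}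
    (hz : z ∈ closure {p | stratumType p = stratumType w})
    (h : stratumLevel z = stratumLevel w) : stratumType z = stratumType w := by
  have d1 : Degenerates (shape w.1) (shape z.1) :=
    degenerates_of_mem_closure (Y := fun p : ComplexConf (N + 2) × ComplexConf (N + 2) =>
      shape p.1) (by fun_prop) (closure_mono (fun p hp => (stratumType_eq_iff.1 hp).1.1) hz)
  have d2 : Degenerates (shape w.2) (shape z.2) :=
    degenerates_of_mem_closure (Y := fun p : ComplexConf (N + 2) × ComplexConf (N + 2) =>
      shape p.2) (by fun_prop) (closure_mono (fun p hp => (stratumType_eq_iff.1 hp).1.2) hz)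
  have d3 : AreOpposite w → AreOpposite z := fun hw =>
    closure_minimal (fun p hp => (stratumType_eq_iff.1 hp).2.2 hw) isClosed_areOpposite hz
  have l1 := d1.numColumns_le
  have l2 := d2.numColumns_le
  have m1 := numColumns_le (shape w.1)
  have m2 := numColumns_le (shape w.2)
  have key : numColumns (shape z.1) = numColumns (shape w.1) ∧
      numColumns (shape z.2) = numColumns (shape w.2) ∧ (AreOpposite z ↔ AreOpposite w) := by
    unfold stratumLevel at h
    by_cases ha : AreOpposite w
    · rw [if_pos ha, if_pos (d3 ha)] at h
      exact ⟨by omega, by omega, iff_of_true (d3 ha) ha⟩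
    · by_cases hb : AreOpposite z
      · rw [if_neg ha, if_pos hb] at h
        omega
      · rw [if_neg ha, if_neg hb] at h
        exact ⟨by omega, by omega, iff_of_false hb ha⟩
  exact stratumType_eq_iff.2
    ⟨⟨d1.cellType_eq (shape_injective _) key.1, d2.cellType_eq (shape_injective _) key.2.1⟩,
      key.2.2⟩

lemma exists_stratum_nhd {N : ℕ} (w : ComplexConf (N + 2) × ComplexConf (N + 2)) :
    ∃ V, IsOpen V ∧ (∀ z, stratumType z = stratumType w → z ∈ V) ∧
      HasMotionPlanningSection (ComplexConf (N + 2)) V := by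
  have hmem : ∀ z, stratumType z = stratumType w → z ∈ shapeNhd (shape w.1) (shape w.2) := by
    intro z hz
    rw [stratumType_eq_iff] at hz
    exact ⟨fun t => injective_segment_of_cellType_eq (shape_injective _) hz.1.1 t.2.1 t.2.2,
      fun t => injective_segment_of_cellType_eq (shape_injective _) hz.1.2 t.2.1 t.2.2⟩
  by_cases ha : AreOpposite w
  · refine ⟨shapeNhd (shape w.1) (shape w.2) ∩
      {p | -(firstEdge p.2 / firstEdge p.1) ∈ slitPlane},
      (isOpen_shapeNhd _ _).inter (isOpen_slitPlane.preimage continuous_edgeRatio.neg),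
      fun z hz => ⟨hmem z hz, ?_⟩, ?_⟩
    · exact neg_mem_slitPlane_of_notMem
        (div_ne_zero (firstEdge_ne_zero _) (firstEdge_ne_zero _)) ((stratumType_eq_iff.1 hz).2.2 ha)
    · exact hasMotionPlanningSection_of_subset_shapeNhd (shape_injective _) (shape_injective _)
        inter_subset_left (Or.inr fun p hp => hp.2)
  · refine ⟨shapeNhd (shape w.1) (shape w.2) ∩ {p | firstEdge p.2 / firstEdge p.1 ∈ slitPlane},
      (isOpen_shapeNhd _ _).inter (isOpen_slitPlane.preimage continuous_edgeRatio),
      fun z hz => ⟨hmem z hz, ?_⟩, ?_⟩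
    · exact not_not.1 fun h => ha ((stratumType_eq_iff.1 hz).2.1 h)
    · exact hasMotionPlanningSection_of_subset_shapeNhd (shape_injective _) (shape_injective _)
        inter_subset_left (Or.inl fun p hp => hp.2)

theorem hasTCCover_complexConf (N : ℕ) : HasTCCover (ComplexConf (N + 2)) (2 * N + 2) :=
  hasTCCover_of_stratification stratumType (fun p => ⟨stratumLevel p, stratumLevel_lt p⟩)
    (fun _ _ hz h => stratumType_eq_of_mem_closure hz (Fin.mk.inj h)) exists_stratum_nhd

/-- A point of the plane as a complex number. -/
noncomputable def complexConfHomeomorph (n : ℕ) : ConfSpace n 2 ≃ₜ ComplexConf n :=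
  (Homeomorph.piCongrRight fun _ => Complex.basisOneI.equivFunL.symm.toHomeomorph).subtype
    fun _ => ⟨fun h _ _ hij => h (Complex.basisOneI.equivFunL.symm.injective hij),
      fun h _ _ hij => h (congrArg Complex.basisOneI.equivFunL.symm hij)⟩

end UpperBound

/-- the topological complexity of the configuration space of `n ≥ 2`
ordered distinct points in the plane equals `2n - 2`. -/
theorem tc_config_plane (n : ℕ) (hn : 2 ≤ n) :
    TopComplexity (ConfSpace n 2) = (2 * n - 2 : ℕ) := by
  obtain ⟨N, rfl⟩ := Nat.exists_eq_add_of_le' hn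
  have e : 2 * (N + 2) - 2 = 2 * N + 2 := by omega
  rw [e]
  refine le_antisymm (sInf_le ⟨_, rfl, ?_⟩) (le_sInf ?_)
  · exact (hasTCCover_complexConf N).of_homeomorph (complexConfHomeomorph (N + 2)).symm
  · rintro _ ⟨k, rfl, hk⟩
    by_contra h
    rw [Nat.cast_le, not_le] at h
    exact not_hasTCCover_complexConf (Nat.lt_succ_iff.1 h)
      (hk.of_homeomorph (complexConfHomeomorph (N + 2)))
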